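/- arXiv:2306.07583 — 8 statements merged into one kernel-verified Lean document; each statement's English description precedes it below -/
import Mathlib

section
/- Let n ≥ 1 be a natural number, let C ≥ 4e be a real number, let V be a finite set with |V| ≥ C·n, and let k ≥ 1. Let H be a random function from Fin n to V (defined on some probability space) that is 2k-wise independent and uniform. Then with probability at least 1 − 4·(4e/C)^{min(k, n/C)}, there are at most n/2 indices i ∈ Fin n for which there exists an index j ≠ i with H(i) = H(j). -/
open MeasureTheory Real Set

/-- `H : Ω → Fin n → V` is a `k`-wise independent and uniform random function:
for every set `T` of at most `k` indices, the joint distribution of `(H i)_{i ∈ T}`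
is that of independent uniform random variables on `V`. -/
def KWiseUniform {Ω V : Type*} [MeasurableSpace Ω] [Fintype V]
    (μ : Measure Ω) {n : ℕ} (k : ℕ) (H : Ω → Fin n → V) : Prop :=
  ∀ T : Finset (Fin n), T.card ≤ k → ∀ f : Fin n → V,
    μ {ω | ∀ i ∈ T, H ω i = f i} = ((Fintype.card V : ENNReal))⁻¹ ^ T.card


open Classical in
/-- Admissible ordered pairs outside `U`. -/
noncomputable def admPairs {n : ℕ} (U : Finset (Fin n)) : Finset (Fin n × Fin n) :=
  Finset.univ.filter fun p => p.1 ∉ U ∧ p.2 ∉ U ∧ p.1 ≠ p.2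

open Classical in
/-- Number of sequences of `m` disjoint monochromatic ordered pairs outside `U`. -/
noncomputable def cntSeq {n : ℕ} {V : Type*} (h : Fin n → V) : ℕ → Finset (Fin n) → ℕ
  | 0, _ => 1
  | m + 1, U => ∑ p ∈ admPairs U,
      if h p.1 = h p.2 then cntSeq h m (insert p.1 (insert p.2 U)) else 0

open Classical in
/-- Indices outside `U` colliding with another index outside `U`. -/
noncomputable def collSet {n : ℕ} {V : Type*} (h : Fin n → V) (U : Finset (Fin n)) :
    Finset (Fin n) :=
  Finset.univ.filter fun i => i ∉ U ∧ ∃ j, j ∉ U ∧ j ≠ i ∧ h i = h j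

open Classical in
lemma collSet_step {n : ℕ} {V : Type*} (h : Fin n → V) (U : Finset (Fin n)) (a b : Fin n)
    (hab : h a = h b) :
    (collSet h U).card ≤ (collSet h (insert a (insert b U))).card + 3 := by
  set U' := insert a (insert b U) with hU'
  let R : Finset (Fin n) := (collSet h U).filter fun i => i ∉ U' ∧ i ∉ collSet h U'
  have hR : R.card ≤ 1 := by
    rw [Finset.card_le_one]
    have key : ∀ i ∈ R, h i = h a := by
      intro i hi
      simp only [R, collSet, Finset.mem_filter, Finset.mem_univ, true_and, not_and, not_exists] at hi
      obtain ⟨⟨hiU, j, hj, hji, hij⟩, hi', hn⟩ := hi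
      have : j ∈ U' := by
        by_contra hc
        exact hn hi' j hc hji hij
      simp only [hU', Finset.mem_insert] at this
      rcases this with rfl | rfl | h3
      · exact hij
      · rw [hij, hab]
      · exact absurd h3 hj
    intro i hi j hj
    by_contra hne
    have h1 := key i hi
    have h2 := key j hj
    simp only [R, collSet, Finset.mem_filter, Finset.mem_univ, true_and, not_and, not_exists] at hi hj
    exact hi.2.2 hi.2.1 j hj.2.1 (Ne.symm hne) (h1.trans h2.symm)
  have hsub : collSet h U ⊆ collSet h U' ∪ ({a, b} ∪ R) := by
    intro i hi
    by_cases h1 : i ∈ collSet h U'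
    · simp [h1]
    by_cases h2 : i ∈ U'
    · have hiU : i ∉ U := by
        simp only [collSet, Finset.mem_filter] at hi; exact hi.2.1
      simp only [hU', Finset.mem_insert] at h2
      simp only [Finset.mem_union, Finset.mem_insert, Finset.mem_singleton]
      tauto
    · have : i ∈ R := by simp only [R, Finset.mem_filter]; exact ⟨hi, h2, h1⟩
      simp [this]
  have c1 := Finset.card_le_card hsub
  have c2 := Finset.card_union_le (collSet h U') ({a, b} ∪ R)
  have c3 := Finset.card_union_le ({a, b} : Finset (Fin n)) R
  have c4 : ({a, b} : Finset (Fin n)).card ≤ 2 := Finset.card_le_two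
  omega

open Classical in
lemma cntSeq_lower {n : ℕ} {V : Type*} (h : Fin n → V) (c : ℝ) (hc : 0 ≤ c) :
    ∀ (m : ℕ) (U : Finset (Fin n)), c + 3 * m ≤ (collSet h U).card + 3 →
      c ^ m ≤ (cntSeq h m U : ℝ) := by
  intro m
  induction m with
  | zero => intro U _; simp [cntSeq]
  | succ m ih =>
    intro U hU
    have hA : c ≤ (collSet h U).card := by
      push_cast at hU
      have : (0 : ℝ) ≤ m := by positivity
      linarith
    have hcard : (collSet h U).card ≤ ((admPairs U).filter fun p => h p.1 = h p.2).card := by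
      apply Finset.card_le_card_of_surjOn (fun p => p.1)
      intro i hi
      simp only [collSet, Finset.coe_filter, Finset.mem_univ, true_and, Set.mem_ofPred_eq] at hi
      obtain ⟨hiU, j, hj, hji, hij⟩ := hi
      refine ⟨(i, j), ?_, rfl⟩
      simp only [admPairs, Finset.coe_filter, Finset.mem_filter, Finset.mem_univ, true_and,
        Set.mem_ofPred_eq]
      exact ⟨⟨hiU, hj, hji.symm⟩, hij⟩
    have : (cntSeq h (m + 1) U : ℝ) = ∑ p ∈ (admPairs U).filter (fun p => h p.1 = h p.2),
        (cntSeq h m (insert p.1 (insert p.2 U)) : ℝ) := by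
      rw [cntSeq, ← Finset.sum_filter]
      push_cast
      rfl
    rw [this]
    calc c ^ (m + 1) = c * c ^ m := by ring
      _ ≤ ((admPairs U).filter fun p => h p.1 = h p.2).card * c ^ m := by
        gcongr
        exact hA.trans (by exact_mod_cast hcard)
      _ = ∑ p ∈ (admPairs U).filter (fun p => h p.1 = h p.2), c ^ m := by simp
      _ ≤ _ := by
        apply Finset.sum_le_sum
        intro p hp
        apply ih
        have h3 := collSet_step h U p.1 p.2 (Finset.mem_filter.1 hp).2
        have h3' : ((collSet h U).card : ℝ) ≤
          (collSet h (insert p.1 (insert p.2 U))).card + 3 := by exact_mod_cast h3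
        push_cast at hU
        linarith

open Classical in
lemma cntSeq_upper {Ω V : Type*} [MeasurableSpace Ω] [Fintype V] [MeasurableSpace V]
    [MeasurableSingletonClass V] (μ : Measure Ω) (n k : ℕ) (hV : Fintype.card V ≠ 0)
    (H : Ω → Fin n → V) (hmeas : ∀ i, Measurable fun ω => H ω i)
    (hind : KWiseUniform μ k H) :
    ∀ (m : ℕ) (U : Finset (Fin n)) (f : Fin n → V), U.card + 2 * m ≤ k →
      ∫⁻ ω in {ω | ∀ i ∈ U, H ω i = f i}, (cntSeq (H ω) m U : ENNReal) ∂μ ≤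
        ((n : ENNReal) ^ 2 * (Fintype.card V : ENNReal)⁻¹) ^ m *
          (Fintype.card V : ENNReal)⁻¹ ^ U.card := by
  have hH : Measurable H := measurable_pi_iff.2 hmeas
  have hF : ∀ m U, Measurable fun ω => (cntSeq (H ω) m U : ENNReal) := fun m U =>
    (Measurable.of_discrete (f := fun h : Fin n → V => (cntSeq h m U : ENNReal))).comp hH
  intro m
  induction m with
  | zero =>
    intro U f hU
    simp only [cntSeq, Nat.cast_one, lintegral_const, Measure.restrict_apply MeasurableSet.univ,
      Set.univ_inter, one_mul, pow_zero]
    exact (hind U (by omega) f).le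
  | succ m ih =>
    intro U f hU
    set N : ENNReal := (Fintype.card V : ENNReal) with hN
    have hN0 : N ≠ 0 := by simpa [hN] using hV
    have hNt : N ≠ ⊤ := by simp [hN]
    set S := {ω | ∀ i ∈ U, H ω i = f i} with hS
    have hE : ∀ p : Fin n × Fin n, MeasurableSet {ω | H ω p.1 = H ω p.2} := fun p =>
      measurableSet_eq_fun (hmeas _) (hmeas _)
    have key : ∀ p ∈ admPairs U,
        ∫⁻ ω in S, ({ω | H ω p.1 = H ω p.2}.indicator
          (fun ω => (cntSeq (H ω) m (insert p.1 (insert p.2 U)) : ENNReal)) ω) ∂μ ≤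
        N⁻¹ * (((n : ENNReal) ^ 2 * N⁻¹) ^ m * N⁻¹ ^ U.card) := by
      intro p hp
      simp only [admPairs, Finset.mem_filter, Finset.mem_univ, true_and] at hp
      obtain ⟨h1, h2, h12⟩ := hp
      rw [lintegral_indicator (hE p), Measure.restrict_restrict (hE p)]
      have hcard : (insert p.1 (insert p.2 U)).card = U.card + 2 := by
        rw [Finset.card_insert_of_notMem (by simp [h1, h12]), Finset.card_insert_of_notMem h2]
      let g : V → Fin n → V := fun v => Function.update (Function.update f p.1 v) p.2 v
      have hsub : {ω | H ω p.1 = H ω p.2} ∩ S ⊆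
          ⋃ v : V, {ω | ∀ i ∈ insert p.1 (insert p.2 U), H ω i = g v i} := by
        rintro ω ⟨he, hs⟩
        simp only [Set.mem_ofPred_eq] at he
        refine Set.mem_iUnion.2 ⟨H ω p.1, ?_⟩
        intro i hi
        by_cases hi2 : i = p.2
        · subst hi2; simp [g, he]
        by_cases hi1 : i = p.1
        · subst hi1; simp [g, h12]
        have : i ∈ U := by simpa [hi1, hi2] using hi
        simp [g, hi1, hi2, hs i this]
      calc _ ≤ ∫⁻ ω in ⋃ v : V, {ω | ∀ i ∈ insert p.1 (insert p.2 U), H ω i = g v i},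
              (cntSeq (H ω) m (insert p.1 (insert p.2 U)) : ENNReal) ∂μ :=
            lintegral_mono_set hsub
        _ ≤ _ := lintegral_iUnion_le _ _
        _ = ∑ v : V, _ := tsum_fintype _
        _ ≤ ∑ v : V, (((n : ENNReal) ^ 2 * N⁻¹) ^ m * N⁻¹ ^ (U.card + 2)) := by
            apply Finset.sum_le_sum
            intro v _
            have := ih (insert p.1 (insert p.2 U)) (g v) (by rw [hcard]; omega)
            rwa [hcard] at this
        _ = N * (((n : ENNReal) ^ 2 * N⁻¹) ^ m * N⁻¹ ^ (U.card + 2)) := by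
            simp [hN]
        _ = (N * N⁻¹) * (N⁻¹ * (((n : ENNReal) ^ 2 * N⁻¹) ^ m * N⁻¹ ^ U.card)) := by ring
        _ ≤ _ := by rw [ENNReal.mul_inv_cancel hN0 hNt, one_mul]
    have hexp : ∀ ω, (cntSeq (H ω) (m + 1) U : ENNReal) = ∑ p ∈ admPairs U,
        {ω | H ω p.1 = H ω p.2}.indicator
          (fun ω => (cntSeq (H ω) m (insert p.1 (insert p.2 U)) : ENNReal)) ω := by
      intro ω
      rw [cntSeq]
      push_cast
      apply Finset.sum_congr rfl
      intro p _
      simp [Set.indicator_apply]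
    simp_rw [hexp]
    rw [lintegral_finsetSum _ (fun p _ => (hF _ _).indicator (hE p))]
    calc _ ≤ ∑ p ∈ admPairs U, N⁻¹ * (((n : ENNReal) ^ 2 * N⁻¹) ^ m * N⁻¹ ^ U.card) :=
          Finset.sum_le_sum key
      _ = (admPairs U).card * (N⁻¹ * (((n : ENNReal) ^ 2 * N⁻¹) ^ m * N⁻¹ ^ U.card)) := by simp
      _ ≤ (n : ENNReal) ^ 2 * (N⁻¹ * (((n : ENNReal) ^ 2 * N⁻¹) ^ m * N⁻¹ ^ U.card)) := by
          gcongr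
          have : (admPairs U).card ≤ n ^ 2 := by
            refine (Finset.card_le_univ _).trans ?_
            simp [sq]
          exact_mod_cast this
      _ = _ := by ring

theorem stmt0 {Ω V : Type*} [MeasurableSpace Ω] [Fintype V] [MeasurableSpace V] [MeasurableSingletonClass V]
    (μ : Measure Ω) [IsProbabilityMeasure μ]
    (n k : ℕ) (hn : 1 ≤ n) (hk : 1 ≤ k)
    (C : ℝ) (hC : 4 * Real.exp 1 ≤ C)
    (hV : C * n ≤ Fintype.card V)
    (H : Ω → Fin n → V) (hmeas : ∀ i, Measurable fun ω => H ω i)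
    (hind : KWiseUniform μ (2 * k) H) :
    ENNReal.ofReal (1 - 4 * (4 * Real.exp 1 / C) ^ (min (k : ℝ) (n / C))) ≤
      μ {ω | 2 * Set.ncard {i : Fin n | ∃ j, j ≠ i ∧ H ω i = H ω j} ≤ n} := by
  have he : (2.7 : ℝ) < Real.exp 1 := by linarith [Real.exp_one_gt_d9]
  have hC0 : 0 < C := by linarith
  have hn0 : (0 : ℝ) < n := by exact_mod_cast hn
  have hNpos : (0 : ℝ) < Fintype.card V := lt_of_lt_of_le (by positivity) hV
  have hN0 : Fintype.card V ≠ 0 := by intro h0; simp [h0] at hNpos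
  set G := {ω | 2 * Set.ncard {i : Fin n | ∃ j, j ≠ i ∧ H ω i = H ω j} ≤ n} with hG
  set x : ℝ := min (k : ℝ) (n / C) with hx
  set m := ⌈x⌉₊ with hm
  have hx0 : 0 ≤ x := le_min (by positivity) (by positivity)
  have hmk : m ≤ k := Nat.ceil_le.2 (min_le_left _ _)
  have hxm : x ≤ m := Nat.le_ceil x
  have hmx : (m : ℝ) < x + 1 := Nat.ceil_lt_add_one hx0
  have hmn : (m : ℝ) ≤ n / C + 1 := by linarith [min_le_right (k : ℝ) (n / C)]
  set c : ℝ := n / 2 - 3 * (n / C) with hc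
  have hc0 : 0 < c := by
    have : n / C < n / 6 := by
      apply div_lt_div_of_pos_left hn0 (by norm_num) (by linarith)
    rw [hc]; linarith
  have hF : Measurable fun ω => (cntSeq (H ω) m ∅ : ENNReal) :=
    (Measurable.of_discrete (f := fun h : Fin n → V => (cntSeq h m ∅ : ENNReal))).comp
      (measurable_pi_iff.2 hmeas)
  have hsub : Gᶜ ⊆ {ω | ENNReal.ofReal (c ^ m) ≤ (cntSeq (H ω) m ∅ : ENNReal)} := by
    intro ω hω
    simp only [hG, Set.mem_compl_iff, Set.mem_ofPred_eq, not_le] at hω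
    have hcol : {i : Fin n | ∃ j, j ≠ i ∧ H ω i = H ω j} = (collSet (H ω) ∅ : Finset (Fin n)) := by
      ext i; simp [collSet]
    rw [hcol, Set.ncard_coe_finset] at hω
    have hω' : (n : ℝ) < 2 * (collSet (H ω) ∅).card := by exact_mod_cast hω
    have := cntSeq_lower (H ω) c hc0.le m ∅ (by rw [hc]; linarith)
    simp only [Set.mem_ofPred_eq]
    rw [← ENNReal.ofReal_natCast]
    exact ENNReal.ofReal_le_ofReal this
  have hne : Nonempty V := Fintype.card_pos_iff.1 (Nat.pos_of_ne_zero hN0)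
  have hup := cntSeq_upper μ n (2 * k) hN0 H hmeas hind m ∅ (fun _ => hne.some)
    (by simp; omega)
  simp only [Finset.notMem_empty, false_imp_iff, implies_true, Set.setOf_true,
    Measure.restrict_univ, Finset.card_empty, pow_zero, mul_one] at hup
  have hmark := mul_meas_ge_le_lintegral hF (μ := μ) (ENNReal.ofReal (c ^ m))
  set P := μ.real Gᶜ with hP
  have hPE : μ Gᶜ = ENNReal.ofReal P := by simp [hP, Measure.real]
  have hconv : ((n : ENNReal) ^ 2 * (Fintype.card V : ENNReal)⁻¹) ^ m =
      ENNReal.ofReal (((n : ℝ) ^ 2 * (Fintype.card V : ℝ)⁻¹) ^ m) := by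
    rw [ENNReal.ofReal_pow (by positivity), ENNReal.ofReal_mul (by positivity),
      ENNReal.ofReal_pow (by positivity), ENNReal.ofReal_inv_of_pos hNpos,
      ENNReal.ofReal_natCast, ENNReal.ofReal_natCast]
  have hreal : c ^ m * P ≤ ((n : ℝ) ^ 2 * (Fintype.card V : ℝ)⁻¹) ^ m := by
    have h1 : ENNReal.ofReal (c ^ m) * μ Gᶜ ≤
        ENNReal.ofReal (((n : ℝ) ^ 2 * (Fintype.card V : ℝ)⁻¹) ^ m) := by
      rw [← hconv]
      exact (mul_le_mul_right (measure_mono hsub) _).trans (hmark.trans hup)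
    rw [hPE, ← ENNReal.ofReal_mul (by positivity)] at h1
    exact (ENNReal.ofReal_le_ofReal_iff (by positivity)).1 h1
  have hratio : (n : ℝ) ^ 2 * (Fintype.card V : ℝ)⁻¹ ≤ c * (4 * Real.exp 1 / C) := by
    have h1 : (n : ℝ) ^ 2 * (Fintype.card V : ℝ)⁻¹ ≤ n / C := by
      rw [← div_eq_mul_inv, div_le_div_iff₀ hNpos hC0]
      nlinarith
    refine h1.trans ?_
    have h2 : 1 ≤ (1 / 2 - 3 / C) * (4 * Real.exp 1) := by
      have : 3 / C ≤ 3 / (4 * Real.exp 1) := div_le_div_of_nonneg_left (by norm_num) (by linarith) hC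
      have h3 : 3 / (4 * Real.exp 1) * (4 * Real.exp 1) = 3 := by field_simp
      nlinarith
    have h4 : c * (4 * Real.exp 1 / C) = n / C * ((1 / 2 - 3 / C) * (4 * Real.exp 1)) := by
      rw [hc]; field_simp
    rw [h4]
    exact le_mul_of_one_le_right (by positivity) h2
  have hPm : P ≤ (4 * Real.exp 1 / C) ^ m := by
    have h1 : c ^ m * P ≤ c ^ m * (4 * Real.exp 1 / C) ^ m := by
      rw [← mul_pow]
      exact hreal.trans (pow_le_pow_left₀ (by positivity) hratio m)
    exact le_of_mul_le_mul_left h1 (by positivity)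
  have hPx : P ≤ (4 * Real.exp 1 / C) ^ x := by
    refine hPm.trans ?_
    rw [← Real.rpow_natCast]
    exact Real.rpow_le_rpow_of_exponent_ge (by positivity) ((div_le_one hC0).2 hC) hxm
  have hone : (1 : ENNReal) ≤ μ G + μ Gᶜ := by
    have := measure_union_le (μ := μ) G Gᶜ
    rwa [Set.union_compl_self, measure_univ] at this
  have hpos : 0 ≤ (4 * Real.exp 1 / C) ^ x := by positivity
  calc ENNReal.ofReal (1 - 4 * (4 * Real.exp 1 / C) ^ x) ≤ ENNReal.ofReal (1 - P) :=
        ENNReal.ofReal_le_ofReal (by linarith)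
    _ = 1 - μ Gᶜ := by
        rw [ENNReal.ofReal_sub _ measureReal_nonneg, hPE, ENNReal.ofReal_one]
    _ ≤ μ G := tsub_le_iff_right.2 hone
end

section
/- Let n ≥ 1 be a natural number, let C ≥ 4e be a real number, let V be a finite set with |V| ≥ C·n, and let r be a natural number with 1 ≤ r and C·r ≤ n. Let H be a random function from Fin n to V that is 2r-wise independent and uniform, and let Y denote the random variable counting the ordered consecutive collision pairs of H, i.e., Y = #{(i,j) : i ≠ j and (i,j) is a consecutive collision pair for H}. Then E[Y^r] ≤ 4·(2en/C)^r. -/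
open MeasureTheory Real Set

/-- `(i, j)` is a consecutive collision pair for `h`: `i ≠ j`, `h i = h j`, and
no index strictly between `i` and `j` has the same hash value. -/
def ConsecPair {n : ℕ} {V : Type*} (h : Fin n → V) (i j : Fin n) : Prop :=
  i ≠ j ∧ h i = h j ∧ ∀ a : Fin n, min i j < a → a < max i j → h a ≠ h i

lemma aux_sum {P : Type*} [Fintype P] [DecidableEq P] (x : ℝ) (hx : 0 ≤ x) (s : ℕ) :
    ∀ r : ℕ, r ≤ s → ∑ f : Fin r → P, x ^ (Finset.univ.image f).card
      ≤ (Fintype.card P * x + s) ^ r := by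
  intro r
  induction r with
  | zero => intro _; simp
  | succ r ih =>
    intro hrs
    have ih' := ih (by omega)
    rw [← (Fin.consEquiv (fun _ : Fin (r+1) => P)).sum_comp, Fintype.sum_prod_type_right,
      pow_succ]
    have key : ∀ f : Fin r → P,
        ∑ e : P, x ^ (Finset.univ.image ((Fin.consEquiv (fun _ : Fin (r+1) => P)) (e, f))).card
        ≤ x ^ (Finset.univ.image f).card * (Fintype.card P * x + s) := by
      intro f
      have himg : ∀ e : P, Finset.univ.image ((Fin.consEquiv (fun _ : Fin (r+1) => P)) (e, f))
          = insert e (Finset.univ.image f) := by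
        intro e
        ext a
        simp [Fin.consEquiv, Fin.exists_fin_succ, eq_comm]
      simp only [himg]
      have h1 : ∀ e : P, x ^ (insert e (Finset.univ.image f)).card ≤
          x ^ (Finset.univ.image f).card * (x + if e ∈ Finset.univ.image f then 1 else 0) := by
        intro e
        have h0 : 0 ≤ x ^ (Finset.univ.image f).card := by positivity
        split_ifs with he
        · rw [Finset.insert_eq_of_mem he]; nlinarith
        · rw [Finset.card_insert_of_notMem he, pow_succ]; simp
      refine (Finset.sum_le_sum fun e _ => h1 e).trans ?_
      rw [← Finset.mul_sum, Finset.sum_add_distrib]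
      have h2 : (Finset.univ.image f).card ≤ s :=
        Finset.card_image_le.trans (by simp; omega)
      have h3 : ((Finset.univ.image f).card : ℝ) ≤ s := by exact_mod_cast h2
      have h4 : (∑ e : P, if e ∈ Finset.univ.image f then (1:ℝ) else 0)
          = (Finset.univ.image f).card := by
        rw [Finset.sum_ite_mem]; simp
      rw [h4]
      simp only [Finset.sum_const, Finset.card_univ, nsmul_eq_mul]
      gcongr
    refine (Finset.sum_le_sum fun f _ => key f).trans ?_
    rw [← Finset.sum_mul]
    gcongr

lemma aux_prob {Ω V : Type*} [MeasurableSpace Ω] [Fintype V] [Nonempty V]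
    (μ : Measure Ω) (n r : ℕ)
    (H : Ω → Fin n → V) (hind : KWiseUniform μ (2 * r) H)
    (S : Finset (Fin n × Fin n)) (hS : S.card ≤ r) :
    μ {ω | ∀ p ∈ S, p.1 < p.2 ∧ ConsecPair (H ω) p.1 p.2}
      ≤ ((Fintype.card V : ENNReal))⁻¹ ^ S.card := by
  classical
  by_cases hne : ∃ ω, ∀ p ∈ S, p.1 < p.2 ∧ ConsecPair (H ω) p.1 p.2
  swap
  · have : {ω | ∀ p ∈ S, p.1 < p.2 ∧ ConsecPair (H ω) p.1 p.2} = ∅ := by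
      ext ω; simp only [mem_ofPred_eq, mem_empty_iff_false, iff_false]
      exact fun h => hne ⟨ω, h⟩
    rw [this]; simp
  obtain ⟨ω₀, h₀⟩ := hne
  have hinj : Set.InjOn Prod.snd (S : Set (Fin n × Fin n)) := by
    rintro ⟨i, j⟩ hp ⟨i', j'⟩ hq hjj
    simp only at hjj
    subst hjj
    obtain ⟨h1, _, h2, h3⟩ := h₀ _ hp
    obtain ⟨h1', _, h2', h3'⟩ := h₀ _ hq
    simp only at *
    rw [min_eq_left h1.le, max_eq_right h1.le] at h3
    rw [min_eq_left h1'.le, max_eq_right h1'.le] at h3'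
    rcases lt_trichotomy i i' with h | h | h
    · exact absurd (h2'.trans h2.symm) (h3 i' h h1')
    · rw [h]
    · exact absurd (h2.trans h2'.symm) (h3' i h h1)
  set J := S.image Prod.snd with hJ
  set T := J ∪ S.image Prod.fst with hT
  have hJc : J.card = S.card := Finset.card_image_of_injOn hinj
  have hTc : T.card ≤ 2 * r := by
    have : T.card ≤ _ := Finset.card_union_le J (S.image Prod.fst)
    have h2 : (S.image Prod.fst).card ≤ S.card := Finset.card_image_le
    omega
  have hJT : J ⊆ T := Finset.subset_union_left
  let v0 : V := Classical.arbitrary V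
  let F : Finset (Fin n → V) := Finset.univ.filter fun f =>
    (∀ i, i ∉ T → f i = v0) ∧ ∀ p ∈ S, f p.1 = f p.2
  have hF : F.card ≤ Fintype.card V ^ (T \ J).card := by
    have : F.card ≤ (Finset.univ : Finset (↥(T \ J) → V)).card := by
      apply Finset.card_le_card_of_injOn (fun f i => f i.1) (by simp [Set.MapsTo])
      intro f hf g hg hfg
      simp only [F, Finset.coe_filter, Finset.mem_univ, true_and, mem_ofPred_eq] at hf hg
      have hfg' : ∀ i ∈ T \ J, f i = g i := fun i hi => congrFun hfg ⟨i, hi⟩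
      have : ∀ i, f i = g i := by
        intro i
        induction i using WellFoundedLT.induction with
        | ind i ih =>
          by_cases hiT : i ∈ T
          · by_cases hiJ : i ∈ J
            · obtain ⟨p, hp, rfl⟩ := Finset.mem_image.1 hiJ
              rw [← hf.2 p hp, ← hg.2 p hp]
              exact ih _ (h₀ p hp).1
            · exact hfg' i (Finset.mem_sdiff.2 ⟨hiT, hiJ⟩)
          · rw [hf.1 i hiT, hg.1 i hiT]
      exact funext this
    rwa [Finset.card_univ, Fintype.card_fun, Fintype.card_coe] at this
  have hsub : {ω | ∀ p ∈ S, p.1 < p.2 ∧ ConsecPair (H ω) p.1 p.2} ⊆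
      ⋃ f ∈ F, {ω | ∀ i ∈ T, H ω i = f i} := by
    intro ω hω
    simp only [mem_iUnion, mem_ofPred_eq, exists_prop]
    refine ⟨fun i => if i ∈ T then H ω i else v0, ?_, ?_⟩
    · simp only [F, Finset.mem_filter, Finset.mem_univ, true_and]
      refine ⟨fun i hi => by simp [hi], fun p hp => ?_⟩
      have h1 : p.1 ∈ T := Finset.mem_union_right _ (Finset.mem_image_of_mem _ hp)
      have h2 : p.2 ∈ T := Finset.mem_union_left _ (Finset.mem_image_of_mem _ hp)
      simp only [h1, h2, if_true]
      exact (hω p hp).2.2.1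
    · intro i hi; simp [hi]
  refine (measure_mono hsub).trans ((measure_biUnion_finset_le F _).trans ?_)
  rw [Finset.sum_congr rfl fun f _ => hind T hTc f]
  rw [Finset.sum_const, nsmul_eq_mul]
  have hcard : T.card = (T \ J).card + S.card := by
    rw [← hJc, Finset.card_sdiff_add_card_eq_card hJT]
  rw [hcard, pow_add, ← mul_assoc]
  have hm0 : (Fintype.card V : ENNReal) ≠ 0 := by simp
  have hmt : (Fintype.card V : ENNReal) ≠ ⊤ := by simp
  have : (F.card : ENNReal) * (Fintype.card V : ENNReal)⁻¹ ^ (T \ J).card ≤ 1 := by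
    calc _ ≤ (Fintype.card V : ENNReal) ^ (T \ J).card
          * (Fintype.card V : ENNReal)⁻¹ ^ (T \ J).card := by
          gcongr; exact_mod_cast hF
      _ = 1 := by rw [← mul_pow, ENNReal.mul_inv_cancel hm0 hmt, one_pow]
  calc _ ≤ 1 * (Fintype.card V : ENNReal)⁻¹ ^ S.card := by gcongr
    _ = _ := one_mul _

lemma aux_count {V : Type*} (n : ℕ) (h : Fin n → V) :
    Set.ncard {p : Fin n × Fin n | ConsecPair h p.1 p.2} ≤
      2 * Set.ncard {p : Fin n × Fin n | p.1 < p.2 ∧ ConsecPair h p.1 p.2} := by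
  have hsub : {p : Fin n × Fin n | ConsecPair h p.1 p.2} ⊆
      {p | p.1 < p.2 ∧ ConsecPair h p.1 p.2} ∪
      Prod.swap '' {p : Fin n × Fin n | p.1 < p.2 ∧ ConsecPair h p.1 p.2} := by
    rintro ⟨i, j⟩ hp
    simp only [mem_ofPred_eq] at hp
    rcases lt_or_gt_of_ne hp.1 with hl | hl
    · left; exact ⟨hl, hp⟩
    · right
      refine ⟨(j, i), ⟨hl, hp.1.symm, hp.2.1.symm, ?_⟩, rfl⟩
      intro a h1 h2
      simp only at h1 h2 ⊢
      rw [← hp.2.1]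
      exact hp.2.2 a (by rwa [min_comm]) (by rwa [max_comm])
  have h1 := Set.ncard_le_ncard hsub (Set.toFinite _)
  have h2 := Set.ncard_union_le {p : Fin n × Fin n | p.1 < p.2 ∧ ConsecPair h p.1 p.2}
    (Prod.swap '' {p : Fin n × Fin n | p.1 < p.2 ∧ ConsecPair h p.1 p.2})
  have h3 := Set.ncard_image_le (f := Prod.swap)
    (Set.toFinite {p : Fin n × Fin n | p.1 < p.2 ∧ ConsecPair h p.1 p.2})
  omega

theorem stmt1 {Ω V : Type*} [MeasurableSpace Ω] [Fintype V]
    [MeasurableSpace V] [MeasurableSingletonClass V]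
    (μ : Measure Ω) [IsProbabilityMeasure μ]
    (n r : ℕ) (hn : 1 ≤ n) (hr : 1 ≤ r)
    (C : ℝ) (hC : 4 * Real.exp 1 ≤ C)
    (hV : C * n ≤ Fintype.card V) (hrn : C * r ≤ n)
    (H : Ω → Fin n → V) (hmeas : ∀ i, Measurable fun ω => H ω i)
    (hind : KWiseUniform μ (2 * r) H) :
    (∫ ω, (Set.ncard {p : Fin n × Fin n | ConsecPair (H ω) p.1 p.2} : ℝ) ^ r ∂μ) ≤
      4 * (2 * Real.exp 1 * n / C) ^ r := by
  classical
  have hCpos : 0 < C := lt_of_lt_of_le (by positivity) hC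
  have hnpos : (0:ℝ) < n := by exact_mod_cast hn
  have hm : (0:ℝ) < Fintype.card V := lt_of_lt_of_le (by positivity) hV
  have hVne : Nonempty V := Fintype.card_pos_iff.1 (by exact_mod_cast hm)
  have hH : Measurable H := measurable_pi_iff.2 hmeas
  let E : Finset (Fin n × Fin n) → Set Ω := fun S =>
    {ω | ∀ p ∈ S, p.1 < p.2 ∧ ConsecPair (H ω) p.1 p.2}
  have hE : ∀ S, MeasurableSet (E S) := by
    intro S
    exact hH (Set.toFinite {h : Fin n → V | ∀ p ∈ S, p.1 < p.2 ∧ ConsecPair h p.1 p.2}).measurableSet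
  let x : ℝ := (Fintype.card V : ℝ)⁻¹
  have hx : 0 ≤ x := by positivity
  have hprob : ∀ S : Finset (Fin n × Fin n), S.card ≤ r → μ.real (E S) ≤ x ^ S.card := by
    intro S hS
    have := aux_prob μ n r H hind S hS
    have h2 := ENNReal.toReal_mono (by simp) this
    simpa [x, Measure.real, E] using h2
  have hpt : ∀ ω, (Set.ncard {p : Fin n × Fin n | ConsecPair (H ω) p.1 p.2} : ℝ) ^ r ≤
      2 ^ r * ∑ f : Fin r → Fin n × Fin n,
        (E (Finset.univ.image f)).indicator (fun _ => (1:ℝ)) ω := by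
    intro ω
    have h1 : (Set.ncard {p : Fin n × Fin n | ConsecPair (H ω) p.1 p.2} : ℝ) ≤
      2 * (Set.ncard {p : Fin n × Fin n | p.1 < p.2 ∧ ConsecPair (H ω) p.1 p.2} : ℝ) := by
      exact_mod_cast aux_count n (H ω)
    refine (pow_le_pow_left₀ (by positivity) h1 r).trans (le_of_eq ?_)
    rw [mul_pow]
    congr 1
    let A : Finset (Fin n × Fin n) :=
      Finset.univ.filter fun p => p.1 < p.2 ∧ ConsecPair (H ω) p.1 p.2
    have hA : Set.ncard {p : Fin n × Fin n | p.1 < p.2 ∧ ConsecPair (H ω) p.1 p.2} = A.card := by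
      rw [← Set.ncard_coe_finset]; congr 1; ext p; simp [A]
    rw [hA]
    have h2 : (Fintype.piFinset fun _ : Fin r => A).card = A.card ^ r := by simp
    have h3 : (A.card : ℝ) ^ r = ((Fintype.piFinset fun _ : Fin r => A).card : ℝ) := by
      rw [h2]; push_cast; rfl
    rw [h3, Finset.card_eq_sum_ones]
    push_cast
    have hmem : ∀ f : Fin r → Fin n × Fin n,
        f ∈ (Fintype.piFinset fun _ : Fin r => A) ↔ ω ∈ E (Finset.univ.image f) := by
      intro f
      simp only [E, A, Fintype.mem_piFinset, Finset.mem_filter, Finset.mem_univ, true_and, mem_ofPred_eq, Finset.forall_mem_image, forall_const]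
    simp only [Set.indicator_apply, ← hmem]
    rw [Finset.sum_ite_mem, Finset.univ_inter]
  have hIntg : ∀ S, Integrable ((E S).indicator (fun _ => (1:ℝ))) μ := fun S =>
    (integrable_const 1).indicator (hE S)
  have hI : (∫ ω, (Set.ncard {p : Fin n × Fin n | ConsecPair (H ω) p.1 p.2} : ℝ) ^ r ∂μ) ≤
      2 ^ r * ∑ f : Fin r → Fin n × Fin n, μ.real (E (Finset.univ.image f)) := by
    refine (integral_mono_of_nonneg (Filter.Eventually.of_forall fun ω => by positivity)
      ((integrable_finsetSum _ fun f _ => hIntg (Finset.univ.image f)).const_mul (2 ^ r))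
      (Filter.Eventually.of_forall hpt)).trans (le_of_eq ?_)
    rw [integral_const_mul, integral_finsetSum _ fun f _ => hIntg (Finset.univ.image f)]
    congr 1
    refine Finset.sum_congr rfl fun f _ => ?_
    rw [integral_indicator_const _ (hE _)]; simp
  have hsum : ∑ f : Fin r → Fin n × Fin n, μ.real (E (Finset.univ.image f)) ≤
      (Fintype.card (Fin n × Fin n) * x + r) ^ r :=
    (Finset.sum_le_sum fun f _ => hprob _ (Finset.card_image_le.trans (by simp))).trans
      (aux_sum x hx r r le_rfl)
  have hr' : (r:ℝ) ≤ n / C := by rw [le_div_iff₀ hCpos]; linarith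
  have hN : (Fintype.card (Fin n × Fin n) : ℝ) * x ≤ n / C := by
    simp only [Fintype.card_prod, Fintype.card_fin, x]
    push_cast
    rw [← div_eq_mul_inv, div_le_div_iff₀ hm hCpos]
    nlinarith
  have he : (2:ℝ) ≤ Real.exp 1 := by have := Real.add_one_le_exp 1; linarith
  have hfin : 2 * ((Fintype.card (Fin n × Fin n) : ℝ) * x + r) ≤ 2 * Real.exp 1 * n / C := by
    have h0 : (0:ℝ) ≤ n / C := by positivity
    have : 2 * Real.exp 1 * n / C = 2 * Real.exp 1 * (n / C) := by ring
    rw [this]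
    nlinarith
  calc _ ≤ _ := hI
    _ ≤ 2 ^ r * (Fintype.card (Fin n × Fin n) * x + r) ^ r := by gcongr
    _ = (2 * (Fintype.card (Fin n × Fin n) * x + r)) ^ r := by rw [mul_pow]
    _ ≤ (2 * Real.exp 1 * n / C) ^ r := by gcongr
    _ ≤ 4 * (2 * Real.exp 1 * n / C) ^ r := by
      have : 0 ≤ (2 * Real.exp 1 * n / C) ^ r := by positivity
      linarith
end

section
/- Let n be a natural number, V a finite set, and h : Fin n → V a function. Then the number of ordered pairs (i,j) with i ≠ j that are consecutive collision pairs for h equals 2·(n − |h(Fin n)|), where |h(Fin n)| is the cardinality of the image of h. Equivalently, each fiber of h of cardinality ℓ ≥ 1 contributes exactly 2(ℓ − 1) ordered consecutive collision pairs. -/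
open Set

theorem consec_aux {n : ℕ} {V : Type*} (h : Fin n → V) (W : Set V) :
    Set.ncard {p : Fin n × Fin n | ConsecPair h p.1 p.2 ∧ h p.1 ∈ W} =
      2 * (Set.ncard {i : Fin n | h i ∈ W} - Set.ncard (W ∩ Set.range h)) := by
  set A : Set (Fin n × Fin n) := {p | ConsecPair h p.1 p.2 ∧ h p.1 ∈ W ∧ p.1 < p.2} with hA
  set N : Set (Fin n) := {j | h j ∈ W ∧ ∃ i, i < j ∧ h i = h j} with hN
  set F : Set (Fin n) := {j | h j ∈ W ∧ ∀ i, i < j → h i ≠ h j} with hF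
  have hAN : Prod.snd '' A = N := by
    ext j
    constructor
    · rintro ⟨⟨i, j⟩, ⟨⟨h1, h2, h3⟩, hw, hlt⟩, rfl⟩
      exact ⟨by simpa [← h2] using hw, i, hlt, h2⟩
    · rintro ⟨hw, i, hlt, he⟩
      classical
      let S : Finset (Fin n) := Finset.univ.filter (fun i => i < j ∧ h i = h j)
      have hS : S.Nonempty := ⟨i, by simp [S, hlt, he]⟩
      have hm := S.max'_mem hS
      obtain ⟨hm1, hm2⟩ : S.max' hS < j ∧ h (S.max' hS) = h j := by
        simpa [S] using hm
      refine ⟨(S.max' hS, j), ⟨⟨hm1.ne, hm2, ?_⟩, by simpa [hm2] using hw, hm1⟩, rfl⟩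
      intro a ha1 ha2 hae
      rw [min_eq_left hm1.le] at ha1
      rw [max_eq_right hm1.le] at ha2
      have := S.le_max' a (by simp [S, ha2, hae, hm2])
      exact absurd ha1 (not_lt.mpr this)
  have hinj : Set.InjOn Prod.snd A := by
    rintro ⟨i, j⟩ ⟨⟨h1, h2, h3⟩, hw, hlt⟩ ⟨i', j'⟩ ⟨⟨h1', h2', h3'⟩, hw', hlt'⟩ hj
    simp only at *
    subst hj
    rw [min_eq_left hlt.le, max_eq_right hlt.le] at h3
    rw [min_eq_left hlt'.le, max_eq_right hlt'.le] at h3'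
    rcases lt_trichotomy i i' with hl | hl | hl
    · exact absurd (h2'.trans h2.symm) (h3 i' hl hlt')
    · rw [hl]
    · exact absurd (h2.trans h2'.symm) (h3' i hl hlt)
  have cA : A.ncard = N.ncard := by rw [← hAN, hinj.ncard_image]
  have hT : {p : Fin n × Fin n | ConsecPair h p.1 p.2 ∧ h p.1 ∈ W} = A ∪ Prod.swap '' A := by
    ext ⟨i, j⟩
    rw [Set.image_swap_eq_preimage_swap]
    simp only [hA, ConsecPair, Set.mem_union, Set.mem_preimage,
      Set.mem_ofPred_eq, Prod.swap, min_comm j i, max_comm j i]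
    constructor
    · rintro ⟨⟨h1, h2, h3⟩, hw⟩
      rcases lt_or_gt_of_ne h1 with hl | hl
      · exact Or.inl ⟨⟨h1, h2, h3⟩, hw, hl⟩
      · exact Or.inr ⟨⟨h1.symm, h2.symm, h2 ▸ h3⟩, h2 ▸ hw, hl⟩
    · rintro (⟨h1, hw, hl⟩ | ⟨⟨h1, h2, h3⟩, hw, hl⟩)
      · exact ⟨h1, hw⟩
      · exact ⟨⟨h1.symm, h2.symm, h2 ▸ h3⟩, h2 ▸ hw⟩
  have hd : Disjoint A (Prod.swap '' A) := by
    rw [Set.disjoint_left]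
    rintro p ⟨_, _, hl⟩ ⟨q, ⟨_, _, hl'⟩, rfl⟩
    exact lt_asymm hl hl'
  have cT := Set.ncard_union_eq hd (Set.toFinite _) (Set.toFinite _)
  rw [Set.ncard_image_of_injective _ Prod.swap_injective, cA] at cT
  have hFi : h '' F = W ∩ Set.range h := by
    ext v
    constructor
    · rintro ⟨j, ⟨hw, _⟩, rfl⟩
      exact ⟨hw, j, rfl⟩
    · rintro ⟨hw, j, rfl⟩
      classical
      let S : Finset (Fin n) := Finset.univ.filter (fun i => h i = h j)
      have hS : S.Nonempty := ⟨j, by simp [S]⟩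
      have hm : h (S.min' hS) = h j := by simpa [S] using S.min'_mem hS
      refine ⟨S.min' hS, ⟨by simpa [hm] using hw, ?_⟩, hm⟩
      intro i hi he
      exact absurd hi (not_lt.mpr (S.min'_le i (by simp [S, he, hm])))
  have hFinj : Set.InjOn h F := by
    rintro i ⟨_, hi⟩ j ⟨_, hj⟩ he
    rcases lt_trichotomy i j with hl | hl | hl
    · exact absurd he (hj i hl)
    · exact hl
    · exact absurd he.symm (hi j hl)
  have cF : F.ncard = (W ∩ Set.range h).ncard := by rw [← hFi, hFinj.ncard_image]
  have hU : {i : Fin n | h i ∈ W} = N ∪ F := by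
    ext j
    simp only [hN, hF, Set.mem_union, Set.mem_ofPred_eq]
    by_cases hx : ∃ i, i < j ∧ h i = h j
    · exact ⟨fun hw => Or.inl ⟨hw, hx⟩, fun hw => hw.elim And.left And.left⟩
    · have : ∀ i, i < j → h i ≠ h j := fun i hi he => hx ⟨i, hi, he⟩
      exact ⟨fun hw => Or.inr ⟨hw, this⟩, fun hw => hw.elim And.left And.left⟩
  have hd2 : Disjoint N F := by
    rw [Set.disjoint_left]
    rintro j ⟨_, i, hi, he⟩ ⟨_, hf⟩
    exact hf i hi he
  have cU := Set.ncard_union_eq hd2 (Set.toFinite _) (Set.toFinite _)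
  rw [hT, hU, cT, cU, cF]
  omega

theorem stmt3 {n : ℕ} {V : Type*} [Fintype V] (h : Fin n → V) :
    Set.ncard {p : Fin n × Fin n | ConsecPair h p.1 p.2} =
      2 * (n - Set.ncard (Set.range h)) ∧
    ∀ v : V, 1 ≤ Set.ncard {i : Fin n | h i = v} →
      Set.ncard {p : Fin n × Fin n | ConsecPair h p.1 p.2 ∧ h p.1 = v} =
        2 * (Set.ncard {i : Fin n | h i = v} - 1) := by
  constructor
  · simpa [Set.ncard_univ] using consec_aux h Set.univ
  · intro v hv
    have hne : {i : Fin n | h i = v}.Nonempty := by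
      apply Set.nonempty_of_ncard_ne_zero
      omega
    obtain ⟨i, hi⟩ := hne
    have hs : ({v} : Set V) ∩ Set.range h = {v} :=
      Set.inter_eq_left.mpr (by rintro _ rfl; exact ⟨i, hi⟩)
    have := consec_aux h {v}
    rw [hs, Set.ncard_singleton] at this
    simpa only [Set.mem_singleton_iff] using this
end

section
/- Let n be a natural number, V a finite set, and h : Fin n → V a function. Then the number of indices i ∈ Fin n for which there exists an index j ≠ i with h(i) = h(j) is at most the number of ordered pairs (i,j), i ≠ j, that are consecutive collision pairs for h, i.e., at most 2·(n − |h(Fin n)|). -/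
open Set

theorem stmt4 {n : ℕ} {V : Type*} [Fintype V] (h : Fin n → V) :
    Set.ncard {i : Fin n | ∃ j, j ≠ i ∧ h i = h j} ≤
      Set.ncard {p : Fin n × Fin n | ConsecPair h p.1 p.2} ∧
    Set.ncard {i : Fin n | ∃ j, j ≠ i ∧ h i = h j} ≤
      2 * (n - Set.ncard (Set.range h)) := by
  constructor
  · have hsub : {i : Fin n | ∃ j, j ≠ i ∧ h i = h j} ⊆
        Prod.fst '' {p : Fin n × Fin n | ConsecPair h p.1 p.2} := by
      rintro i ⟨j₀, hj₀⟩
      obtain ⟨j, ⟨hj1, hj2⟩, hmin⟩ := Set.exists_min_image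
        {j : Fin n | j ≠ i ∧ h i = h j}
        (fun j => (max i j).val - (min i j).val) (Set.toFinite _) ⟨j₀, hj₀⟩
      refine ⟨(i, j), ⟨hj1.symm, hj2, ?_⟩, rfl⟩
      intro a ha1 ha2 hEq
      have hai : a ≠ i := by
        rintro rfl
        rcases le_total a j with hl | hl
        · simp [hl] at ha1
        · simp [hl] at ha2
      have hm := hmin a ⟨hai, hEq.symm⟩
      rcases le_total i j with hl | hl <;> rcases le_total i a with hl' | hl' <;>
        simp only [hl, hl', max_eq_left, max_eq_right, min_eq_left, min_eq_right] at * <;>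
        simp only [Fin.lt_def, Fin.le_def, ne_eq, Fin.ext_iff] at * <;> omega
    exact (Set.ncard_le_ncard hsub (Set.toFinite _)).trans
      (Set.ncard_image_le (Set.toFinite _))
  · let r : Fin n → Fin n := fun i => Set.rangeSplitting h ⟨h i, Set.mem_range_self i⟩
    have hr : ∀ i j, h i = h j → r i = r j := by
      intro i j hij
      simp only [r, hij]
    let R : Set (Fin n) := Set.range (Set.rangeSplitting h)
    have hR : ∀ i ∈ R, r i = i := by
      rintro i ⟨x, rfl⟩
      simp only [r]
      congr 1
      exact Subtype.ext (Set.apply_rangeSplitting h x)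
    have hcard : R.ncard = (Set.range h).ncard := by
      rw [← Nat.card_coe_set_eq (Set.range h),
        show R = Set.rangeSplitting h '' Set.univ from Set.image_univ.symm,
        Set.ncard_image_of_injective _ (Set.rangeSplitting_injective h), Set.ncard_univ]
    have hsub : {i : Fin n | ∃ j, j ≠ i ∧ h i = h j} ⊆ Rᶜ ∪ r '' Rᶜ := by
      rintro i ⟨j, hji, hij⟩
      by_cases hi : i ∈ R
      · right
        refine ⟨j, fun hj => hji ?_, ?_⟩
        · rw [← hR j hj, ← hR i hi, hr i j hij, hR j hj]
          try exact hR j hj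
        · rw [← hr i j hij, hR i hi]
      · exact Or.inl hi
    have h1 := Set.ncard_le_ncard hsub (Set.toFinite _)
    have h2 := Set.ncard_union_le Rᶜ (r '' Rᶜ)
    have h3 : (r '' Rᶜ).ncard ≤ Rᶜ.ncard := Set.ncard_image_le (Set.toFinite _)
    have h4 := Set.ncard_add_ncard_compl R
    rw [Nat.card_eq_fintype_card, Fintype.card_fin] at h4
    omega
end

section
/- Let n be a natural number, V a set, h : Fin n → V a function, and let E be any set of ordered pairs (i,j), i ≠ j, each of which is a consecutive collision pair for h. Then the simple graph G on Fin n whose edges are the unordered pairs {i,j} for (i,j) ∈ E satisfies: every vertex has at most one neighbor smaller than itself and at most one neighbor larger than itself (hence maximum degree at most 2), and G contains no cycle. Consequently, every connected component of G is a path. -/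
open Set

theorem consecPair_symm {n : ℕ} {V : Type*} {h : Fin n → V} {i j : Fin n}
    (H : ConsecPair h i j) : ConsecPair h j i := by
  obtain ⟨h1, h2, h3⟩ := H
  refine ⟨h1.symm, h2.symm, fun a ha hb => ?_⟩
  rw [min_comm] at ha
  rw [max_comm] at hb
  rw [← h2]
  exact h3 a ha hb

theorem stmt5 {n : ℕ} {V : Type*} (h : Fin n → V) (E : Set (Fin n × Fin n))
    (hE : ∀ p ∈ E, ConsecPair h p.1 p.2)
    (G : SimpleGraph (Fin n)) (hG : G = SimpleGraph.fromRel (fun i j => (i, j) ∈ E)) :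
    (∀ v : Fin n, Set.ncard {u : Fin n | G.Adj v u ∧ u < v} ≤ 1) ∧
    (∀ v : Fin n, Set.ncard {u : Fin n | G.Adj v u ∧ v < u} ≤ 1) ∧
    (∀ v : Fin n, Set.ncard (G.neighborSet v) ≤ 2) ∧
    G.IsAcyclic := by
  have key : ∀ u v, G.Adj u v → ConsecPair h u v := by
    intro u v huv
    rw [hG, SimpleGraph.fromRel_adj] at huv
    rcases huv.2 with h1 | h1
    · exact hE _ h1
    · exact consecPair_symm (hE _ h1)
  have lo : ∀ v a b, G.Adj v a → a < v → G.Adj v b → b < v → a = b := by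
    intro v a b ha hav hb hbv
    obtain ⟨-, ea, ca⟩ := key _ _ ha
    obtain ⟨-, eb, cb⟩ := key _ _ hb
    rw [min_eq_right hav.le, max_eq_left hav.le] at ca
    rw [min_eq_right hbv.le, max_eq_left hbv.le] at cb
    rcases lt_trichotomy a b with h1 | h1 | h1
    · exact absurd eb.symm (ca b h1 hbv)
    · exact h1
    · exact absurd ea.symm (cb a h1 hav)
  have hi : ∀ v a b, G.Adj v a → v < a → G.Adj v b → v < b → a = b := by
    intro v a b ha hav hb hbv
    obtain ⟨-, ea, ca⟩ := key _ _ ha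
    obtain ⟨-, eb, cb⟩ := key _ _ hb
    rw [min_eq_left hav.le, max_eq_right hav.le] at ca
    rw [min_eq_left hbv.le, max_eq_right hbv.le] at cb
    rcases lt_trichotomy a b with h1 | h1 | h1
    · exact absurd ea.symm (cb a hav h1)
    · exact h1
    · exact absurd eb.symm (ca b hbv h1)
  have A : ∀ v : Fin n, Set.ncard {u : Fin n | G.Adj v u ∧ u < v} ≤ 1 := fun v =>
    (Set.ncard_le_one (Set.toFinite _)).2 fun a ha b hb => lo v a b ha.1 ha.2 hb.1 hb.2
  have B : ∀ v : Fin n, Set.ncard {u : Fin n | G.Adj v u ∧ v < u} ≤ 1 := fun v =>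
    (Set.ncard_le_one (Set.toFinite _)).2 fun a ha b hb => hi v a b ha.1 ha.2 hb.1 hb.2
  refine ⟨A, B, ?_, ?_⟩
  · intro v
    have hs : G.neighborSet v =
        {u : Fin n | G.Adj v u ∧ u < v} ∪ {u : Fin n | G.Adj v u ∧ v < u} := by
      ext u
      simp only [SimpleGraph.mem_neighborSet, Set.mem_union, Set.mem_setOf_eq]
      constructor
      · intro hu
        rcases lt_or_gt_of_ne hu.ne with h1 | h1
        · exact Or.inr ⟨hu, h1⟩
        · exact Or.inl ⟨hu, h1⟩
      · rintro (hu | hu) <;> exact hu.1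
    rw [hs]
    have := Set.ncard_union_le {u : Fin n | G.Adj v u ∧ u < v} {u : Fin n | G.Adj v u ∧ v < u}
    have := A v
    have := B v
    omega
  · intro w c hc
    obtain ⟨m, hm, hmax⟩ := Finset.exists_max_image c.support.toFinset id
      ⟨w, by simp⟩
    have hm' : m ∈ c.support := by simpa using hm
    have hc' := hc.rotate hm'
    have hle : ∀ x ∈ (c.rotate m hm').support, x ≤ m := by
      intro x hx
      exact hmax x (by simpa using hx)
    have a1 := SimpleGraph.Walk.adj_snd hc'.not_nil
    have a2 := (SimpleGraph.Walk.adj_penultimate hc'.not_nil).symm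
    exact hc'.snd_ne_penultimate (lo m _ _ a1
      (lt_of_le_of_ne (hle _ (SimpleGraph.Walk.getVert_mem_support _ _)) a1.ne') a2
      (lt_of_le_of_ne (hle _ (SimpleGraph.Walk.getVert_mem_support _ _)) a2.ne'))
end

section
/- Let G be a simple graph on the vertex set Fin n, let V be a finite set of cardinality N ≥ 1, and let h(0), …, h(n−1) be mutually independent random variables each uniformly distributed on V. Then the probability that h(i) = h(j) holds for every edge {i,j} of G equals N^{−(q−c)}, where q is the number of vertices of G of degree at least 1 and c is the number of connected components of G that contain at least one edge. -/
open MeasureTheory Set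

theorem stmt6_count (n : ℕ) (G : SimpleGraph (Fin n)) :
    n = Nat.card G.ConnectedComponent + (Set.ncard {v : Fin n | ∃ u, G.Adj v u} -
          Set.ncard {K : G.ConnectedComponent |
            ∃ v u, G.Adj v u ∧ G.connectedComponentMk v = K}) := by
  classical
  set A := {v : Fin n | ∃ u, G.Adj v u} with hA
  set B := {K : G.ConnectedComponent | ∃ v u, G.Adj v u ∧ G.connectedComponentMk v = K} with hB
  have hiso : ∀ v w : Fin n, v ∉ A → G.Reachable v w → v = w := by
    rintro v w hv ⟨p⟩
    cases p with
    | nil => rfl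
    | cons h _ => exact absurd ⟨_, h⟩ hv
  have hBA : B = G.connectedComponentMk '' A := by
    ext K
    constructor
    · rintro ⟨v, u, h, rfl⟩
      exact ⟨v, ⟨u, h⟩, rfl⟩
    · rintro ⟨v, ⟨u, h⟩, rfl⟩
      exact ⟨v, u, h, rfl⟩
  have hle : B.ncard ≤ A.ncard := by
    rw [hBA]
    exact Set.ncard_image_le (Set.toFinite A)
  have hcompl : Bᶜ = G.connectedComponentMk '' Aᶜ := by
    ext K
    constructor
    · intro hK
      induction K using SimpleGraph.ConnectedComponent.ind with
      | h v =>
        refine ⟨v, ?_, rfl⟩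
        rintro ⟨u, h⟩
        exact hK ⟨v, u, h, rfl⟩
    · rintro ⟨v, hv, rfl⟩ ⟨w, u, h, e⟩
      have := hiso v w hv (SimpleGraph.ConnectedComponent.exact e).symm
      subst this
      exact hv ⟨u, h⟩
  have hinj : Bᶜ.ncard = Aᶜ.ncard := by
    rw [hcompl]
    apply Set.ncard_image_of_injOn
    intro v hv w _ e
    exact hiso v w hv (SimpleGraph.ConnectedComponent.exact e)
  have h1 := Set.ncard_add_ncard_compl A
  have h2 := Set.ncard_add_ncard_compl B
  rw [Nat.card_fin] at h1
  omega

theorem stmt6 {Ω V : Type*} [MeasurableSpace Ω] [Fintype V]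
    [MeasurableSpace V] [MeasurableSingletonClass V]
    (μ : Measure Ω) [IsProbabilityMeasure μ]
    (n N : ℕ) (hN : 1 ≤ N) (hcard : Fintype.card V = N)
    (G : SimpleGraph (Fin n))
    (H : Ω → Fin n → V) (hmeas : ∀ i, Measurable fun ω => H ω i)
    -- the `H i` are mutually independent and each uniform on `V`:
    (hind : ∀ f : Fin n → V, μ {ω | ∀ i, H ω i = f i} = ((N : ENNReal))⁻¹ ^ n) :
    μ {ω | ∀ i j, G.Adj i j → H ω i = H ω j} =
      ((N : ENNReal))⁻¹ ^
        (Set.ncard {v : Fin n | ∃ u, G.Adj v u} -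
          Set.ncard {K : G.ConnectedComponent |
            ∃ v u, G.Adj v u ∧ G.connectedComponentMk v = K}) := by
  classical
  have hcount := stmt6_count n G
  set d := (Set.ncard {v : Fin n | ∃ u, G.Adj v u} -
          Set.ncard {K : G.ConnectedComponent |
            ∃ v u, G.Adj v u ∧ G.connectedComponentMk v = K})
  haveI : Fintype G.ConnectedComponent := Fintype.ofFinite _
  have hU : {ω | ∀ i j, G.Adj i j → H ω i = H ω j} =
      ⋃ g : G.ConnectedComponent → V, {ω | ∀ i, H ω i = g (G.connectedComponentMk i)} := by
    ext ω
    simp only [mem_setOf_eq, mem_iUnion]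
    constructor
    · intro h
      have hr : ∀ v w (p : G.Walk v w), p.IsPath → H ω v = H ω w := by
        intro v w p _
        induction p with
        | nil => rfl
        | cons a _ ih => exact (h _ _ a).trans (ih (by simp_all [SimpleGraph.Walk.cons_isPath_iff]))
      exact ⟨fun K => K.lift (H ω) hr, fun i => rfl⟩
    · rintro ⟨g, hg⟩ i j a
      rw [hg, hg, SimpleGraph.ConnectedComponent.sound a.reachable]
  rw [hU, measure_iUnion, tsum_fintype]
  · simp_rw [hind]
    rw [Finset.sum_const, Finset.card_univ, Fintype.card_fun, hcard, nsmul_eq_mul,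
      ← Nat.card_eq_fintype_card]
    have hp : ((N : ENNReal))⁻¹ ^ n = ((N : ENNReal))⁻¹ ^ (Nat.card G.ConnectedComponent + d) :=
      congrArg _ hcount
    rw [hp, pow_add, ← mul_assoc, Nat.cast_pow, ← mul_pow, ENNReal.mul_inv_cancel, one_pow, one_mul]
    · exact_mod_cast (by omega : N ≠ 0)
    · exact ENNReal.natCast_ne_top N
  · intro g g' hne
    refine Set.disjoint_left.2 fun ω h h' => hne ?_
    funext K
    induction K using SimpleGraph.ConnectedComponent.ind with
    | h v => exact (h v).symm.trans (h' v)
  · intro g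
    rw [Set.setOf_forall]
    exact MeasurableSet.iInter fun i => hmeas i (measurableSet_singleton _)
end

section
/- Fix natural numbers n, r, q, c with 2 ≤ q ≤ 2r and 1 ≤ c ≤ q/2. Let 𝒢^r_{q,c} be the set of ordered lists of r ordered pairs (i₁,j₁),…,(i_r,j_r) with i_h, j_h ∈ Fin n and i_h ≠ j_h for all h, such that in the simple graph on Fin n whose edge set is {{i_h, j_h} : 1 ≤ h ≤ r}, every connected component is a path, exactly c connected components contain at least 2 vertices, and these c components contain q vertices in total. Then |𝒢^r_{q,c}| ≤ C(r, q−c) · (2(q−c))^{r−(q−c)} · C(2(q−c), q) · n^q · q^{2(q−c)−q}, where C(a,b) denotes the binomial coefficient. -/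
open Set

/-- The simple graph on `Fin n` associated to a list of `r` ordered pairs:
`{i, j}` is an edge whenever `(i, j)` or `(j, i)` occurs in the list. -/
def listGraph {n r : ℕ} (L : Fin r → Fin n × Fin n) : SimpleGraph (Fin n) :=
  SimpleGraph.fromRel (fun i j => ∃ h, L h = (i, j))

/-- `𝒢^r_{q,c}`: lists of `r` ordered pairs of distinct indices such that in the
associated graph every connected component is a path (i.e. the graph is acyclic with all
degrees at most `2`), exactly `c` components have at least `2` vertices, and those
components contain `q` vertices in total. -/
def Gcal (n r q c : ℕ) : Set (Fin r → Fin n × Fin n) :=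
  {L | (∀ h, (L h).1 ≠ (L h).2) ∧
    (listGraph L).IsAcyclic ∧
    (∀ v, Set.ncard ((listGraph L).neighborSet v) ≤ 2) ∧
    Set.ncard {K : (listGraph L).ConnectedComponent | 2 ≤ Set.ncard K.supp} = c ∧
    Set.ncard {v : Fin n | 2 ≤ Set.ncard ((listGraph L).connectedComponentMk v).supp} = q}

theorem forest_edges {V : Type*} [Finite V] (G : SimpleGraph V) (hG : G.IsAcyclic) :
    Nat.card G.edgeSet + Nat.card G.ConnectedComponent = Nat.card V := by
  classical
  have := Fintype.ofFinite V
  have hfin : Finite G.ConnectedComponent := Quot.finite _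
  have := Fintype.ofFinite G.ConnectedComponent
  have e1 : Nat.card V = ∑ K : G.ConnectedComponent, Nat.card K.supp := by
    rw [← Nat.card_sigma]
    refine (Nat.card_congr ?_)
    exact (Equiv.sigmaFiberEquiv G.connectedComponentMk).symm
  have e2 : Nat.card G.edgeSet =
      ∑ K : G.ConnectedComponent, Nat.card K.toSimpleGraph.edgeSet := by
    rw [← Nat.card_sigma]
    symm
    refine Nat.card_congr (Equiv.ofBijective
      (fun x => (⟨x.2.1.map (fun v : x.1 => (v : V)), ?_⟩ : G.edgeSet)) ⟨?_, ?_⟩)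
    · obtain ⟨K, e, he⟩ := x
      induction e using Sym2.ind with
      | _ a b => exact he
    · rintro ⟨K, e, he⟩ ⟨K', e', he'⟩ h
      have h' := congrArg Subtype.val h
      change Sym2.map (fun v : K => (v : V)) e = Sym2.map (fun v : K' => (v : V)) e' at h'
      have hK : K = K' := by
        induction e using Sym2.ind with
        | _ a b =>
        induction e' using Sym2.ind with
        | _ a' b' =>
          have : (a : V) ∈ (Sym2.map (fun v : K' => (v : V)) s(a', b')) := by
            rw [← h']; simp
          have ha := a.2
          have ha' := a'.2
          have hb' := b'.2
          simp only [SimpleGraph.ConnectedComponent.mem_supp_iff, SetLike.mem_coe] at *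
          simp only [Sym2.map_mk, Sym2.mem_iff] at this
          rcases this with h | h
          · exact ha.symm.trans (h ▸ ha')
          · exact ha.symm.trans (h ▸ hb')
      subst hK
      have := Sym2.map.injective (Subtype.val_injective) h'
      subst this
      rfl
    · rintro ⟨e, he⟩
      induction e using Sym2.ind with
      | _ a b =>
        have hab : G.Adj a b := he
        refine ⟨⟨G.connectedComponentMk a, ⟨s(⟨a, rfl⟩, ⟨b, ?_⟩), ?_⟩⟩, ?_⟩
        · exact (SimpleGraph.ConnectedComponent.sound hab.reachable).symm
        · exact hab
        · rfl
  rw [e1, e2, Nat.card_eq_fintype_card, Fintype.card_eq_sum_ones, ← Finset.sum_add_distrib]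
  refine Finset.sum_congr rfl fun K _ => ?_
  exact (SimpleGraph.isTree_iff_connected_and_card.mp (hG.isTree_connectedComponent K)).2

theorem image_count {α β : Type*} [Finite α] [Finite β] (q : ℕ) :
    Nat.card {f : α → β // (Set.range f).ncard = q} ≤
      Nat.choose (Nat.card α) q * Nat.card β ^ q * q ^ (Nat.card α - q) := by
  classical
  have := Fintype.ofFinite α
  have := Fintype.ofFinite β
  let X := Σ T : {T : Finset α // T.card = q}, ((T.1 → β) × (↥(T.1ᶜ) → T.1))
  have hX : Nat.card X = Nat.choose (Nat.card α) q * Nat.card β ^ q * q ^ (Nat.card α - q) := by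
    rw [Nat.card_sigma, Finset.sum_congr rfl
      (g := fun _ => Nat.card β ^ q * q ^ (Nat.card α - q))]
    · rw [Finset.sum_const, Finset.card_univ, Fintype.card_finset_len, smul_eq_mul,
        Nat.card_eq_fintype_card (α := α), mul_assoc]
    · rintro ⟨T, hT⟩ _
      simp [Nat.card_prod, Nat.card_fun, Finset.card_compl, hT]
  rw [← hX]
  let F : X → (α → β) := fun x a =>
    if h : a ∈ x.1.1 then x.2.1 ⟨a, h⟩ else x.2.1 (x.2.2 ⟨a, by simpa using h⟩)
  have hF : ∀ f : {f : α → β // (Set.range f).ncard = q}, ∃ x, F x = f.1 := by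
    rintro ⟨f, hf⟩
    obtain ⟨T, -, hT⟩ := Set.exists_subset_bijOn Set.univ f
    rw [Set.image_univ] at hT
    have hc : T.toFinset.card = q := by
      rw [← Set.ncard_eq_toFinset_card', ← hf, ← hT.image_eq, Set.ncard_image_of_injOn hT.injOn]
    have hs : ∀ a, ∃ t : T.toFinset, f t = f a := fun a => by
      obtain ⟨t, ht, e⟩ := hT.surjOn (Set.mem_range_self a)
      exact ⟨⟨t, by simpa using ht⟩, e⟩
    choose g hg using hs
    refine ⟨⟨⟨T.toFinset, hc⟩, fun t => f t, fun t => g t⟩, ?_⟩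
    funext a
    by_cases h : a ∈ T.toFinset
    · simp only [F, dif_pos h]
    · simp only [F, dif_neg h, hg]
  choose G hG using hF
  exact Nat.card_le_card_of_injective G fun a b h => Subtype.ext (by rw [← hG a, ← hG b, h])

theorem list_count (n r m q : ℕ) :
    Set.ncard {L : Fin r → Fin n × Fin n | (Set.range fun h => s((L h).1, (L h).2)).ncard = m ∧
      {v | ∃ h, v = (L h).1 ∨ v = (L h).2}.ncard = q} ≤
      Nat.choose r m * (2 * m) ^ (r - m) * Nat.choose (2 * m) q * n ^ q * q ^ (2 * m - q) := by
  classical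
  let X := Σ S : {S : Finset (Fin r) // S.card = m},
    ({f : S.1 × Bool → Fin n // (Set.range f).ncard = q} × (↥(S.1ᶜ) → S.1 × Bool))
  have hX : Nat.card X ≤
      Nat.choose r m * (2 * m) ^ (r - m) * Nat.choose (2 * m) q * n ^ q * q ^ (2 * m - q) := by
    rw [Nat.card_sigma]
    refine (Finset.sum_le_card_nsmul _ _
      (Nat.choose (2 * m) q * n ^ q * q ^ (2 * m - q) * (2 * m) ^ (r - m)) ?_).trans (le_of_eq ?_)
    · rintro ⟨S, hS⟩ _
      rw [Nat.card_prod]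
      refine Nat.mul_le_mul ?_ (le_of_eq ?_)
      · have := image_count (α := S × Bool) (β := Fin n) q
        simpa [Nat.card_prod, hS, mul_comm m 2] using this
      · simp [Nat.card_prod, Nat.card_fun, Finset.card_compl, hS, mul_comm m 2]
    · rw [Finset.card_univ, Fintype.card_finset_len, smul_eq_mul, Fintype.card_fin]
      ring
  refine le_trans ?_ hX
  let F : X → (Fin r → Fin n × Fin n) := fun x h =>
    if hh : h ∈ x.1.1 then (x.2.1.1 (⟨h, hh⟩, true), x.2.1.1 (⟨h, hh⟩, false))
    else
      let g := x.2.2 ⟨h, by simpa using hh⟩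
      (x.2.1.1 (g.1, g.2), x.2.1.1 (g.1, !g.2))
  rw [← Nat.card_coe_set_eq]
  have hF : ∀ L : ↥{L : Fin r → Fin n × Fin n |
      (Set.range fun h => s((L h).1, (L h).2)).ncard = m ∧
      {v | ∃ h, v = (L h).1 ∨ v = (L h).2}.ncard = q}, ∃ x, F x = L.1 := by
    rintro ⟨L, hm, hq⟩
    obtain ⟨T, -, hT⟩ := Set.exists_subset_bijOn Set.univ (fun h => s((L h).1, (L h).2))
    rw [Set.image_univ] at hT
    have hc : T.toFinset.card = m := by
      rw [← Set.ncard_eq_toFinset_card', ← hm, ← hT.image_eq, Set.ncard_image_of_injOn hT.injOn]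
    let f : T.toFinset × Bool → Fin n := fun p => if p.2 then (L p.1).1 else (L p.1).2
    have hs : ∀ a, ∃ t : T.toFinset × Bool, L a = (f (t.1, t.2), f (t.1, !t.2)) := fun a => by
      obtain ⟨t, ht, e⟩ := hT.surjOn (Set.mem_range_self a)
      simp only [Sym2.eq_iff] at e
      rcases e with e | e
      · exact ⟨(⟨t, by simpa using ht⟩, true), Prod.ext e.1.symm e.2.symm⟩
      · exact ⟨(⟨t, by simpa using ht⟩, false), Prod.ext e.2.symm e.1.symm⟩
    choose g hg using hs
    have hr : Set.range f = {v | ∃ h, v = (L h).1 ∨ v = (L h).2} := by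
      ext v
      constructor
      · rintro ⟨⟨t, b⟩, rfl⟩
        refine ⟨t, ?_⟩
        cases b <;> simp [f]
      · rintro ⟨h, h1 | h1⟩
        · rw [h1, hg h]; exact ⟨_, rfl⟩
        · rw [h1, hg h]; exact ⟨_, rfl⟩
    refine ⟨⟨⟨T.toFinset, hc⟩, ⟨f, by rw [hr]; exact hq⟩, fun t => g t⟩, ?_⟩
    funext a
    by_cases h : a ∈ T.toFinset
    · simp only [F, dif_pos h]
      simp [f]
    · simp only [F, dif_neg h]
      exact (hg a).symm
  choose G hG using hF
  exact Nat.card_le_card_of_injective G fun a b h => Subtype.ext (by rw [← hG a, ← hG b, h])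

theorem comp_count {V : Type*} [Finite V] (G : SimpleGraph V) (hG : G.IsAcyclic) :
    Nat.card G.edgeSet + Set.ncard {K : G.ConnectedComponent | 2 ≤ Set.ncard K.supp} =
      Set.ncard {v : V | 2 ≤ Set.ncard (G.connectedComponentMk v).supp} := by
  classical
  have h := forest_edges G hG
  have hfin : Finite G.ConnectedComponent := Quot.finite _
  have h1 := Set.ncard_add_ncard_compl {K : G.ConnectedComponent | 2 ≤ Set.ncard K.supp}
  have h2 := Set.ncard_add_ncard_compl {v : V | 2 ≤ Set.ncard (G.connectedComponentMk v).supp}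
  have h3 : {K : G.ConnectedComponent | 2 ≤ Set.ncard K.supp}ᶜ =
      G.connectedComponentMk '' {v : V | 2 ≤ Set.ncard (G.connectedComponentMk v).supp}ᶜ := by
    ext K
    constructor
    · intro hK
      obtain ⟨v, rfl⟩ := K.exists_rep
      exact ⟨v, hK, rfl⟩
    · rintro ⟨v, hv, rfl⟩
      exact hv
  have h4 : Set.InjOn G.connectedComponentMk
      {v : V | 2 ≤ Set.ncard (G.connectedComponentMk v).supp}ᶜ := by
    intro v hv w hw e
    simp only [Set.mem_compl_iff, Set.mem_setOf_eq, not_le] at hv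
    exact (Set.ncard_le_one (Set.toFinite _)).mp (Nat.lt_succ_iff.mp hv) v rfl w e.symm
  rw [h3, Set.ncard_image_of_injOn h4] at h1
  omega

theorem two_le_comp_iff {V : Type*} [Finite V] (G : SimpleGraph V) (v : V) :
    2 ≤ Set.ncard (G.connectedComponentMk v).supp ↔ ∃ w, G.Adj v w := by
  constructor
  · intro h
    obtain ⟨w, hw, hne⟩ := Set.exists_ne_of_one_lt_ncard h v
    have hr : G.Reachable v w := (SimpleGraph.ConnectedComponent.exact hw).symm
    obtain ⟨p⟩ := hr
    cases p with
    | nil => exact absurd rfl hne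
    | cons h _ => exact ⟨_, h⟩
  · rintro ⟨w, h⟩
    exact (Set.one_lt_ncard (Set.toFinite _)).mpr
      ⟨v, rfl, w, (SimpleGraph.ConnectedComponent.sound h.reachable).symm, h.ne⟩

theorem stmt7 (n r q c : ℕ) (hq2 : 2 ≤ q) (hqr : q ≤ 2 * r) (hc1 : 1 ≤ c) (hcq : 2 * c ≤ q) :
    (Gcal n r q c).ncard ≤
      Nat.choose r (q - c) * (2 * (q - c)) ^ (r - (q - c)) *
        Nat.choose (2 * (q - c)) q * n ^ q * q ^ (2 * (q - c) - q) := by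
  refine le_trans (Set.ncard_le_ncard ?_ (Set.toFinite _)) (list_count n r (q - c) q)
  rintro L ⟨hne, hac, -, hc, hq⟩
  have hcount := comp_count _ hac
  rw [hc, hq] at hcount
  have hadj : ∀ a b, (listGraph L).Adj a b ↔ ∃ h, s((L h).1, (L h).2) = s(a, b) := by
    intro a b
    simp only [listGraph, SimpleGraph.fromRel_adj, Sym2.eq_iff]
    constructor
    · rintro ⟨-, ⟨h, e⟩ | ⟨h, e⟩⟩
      · exact ⟨h, Or.inl (by simp [e])⟩
      · exact ⟨h, Or.inr (by simp [e])⟩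
    · rintro ⟨h, ⟨e1, e2⟩ | ⟨e1, e2⟩⟩
      · exact ⟨fun e => hne h (by rw [e1, e2, e]), Or.inl ⟨h, Prod.ext e1 e2⟩⟩
      · exact ⟨fun e => hne h (by rw [e1, e2, e]), Or.inr ⟨h, Prod.ext e1 e2⟩⟩
  have hE : (Set.range fun h => s((L h).1, (L h).2)) = (listGraph L).edgeSet := by
    ext e
    induction e using Sym2.ind with
    | _ a b => exact (hadj a b).symm
  have hV : {v | ∃ h, v = (L h).1 ∨ v = (L h).2} =
      {v : Fin n | 2 ≤ Set.ncard ((listGraph L).connectedComponentMk v).supp} := by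
    ext v
    simp only [Set.mem_setOf_eq, two_le_comp_iff, hadj, Sym2.eq_iff]
    constructor
    · rintro ⟨h, e | e⟩
      · exact ⟨_, h, Or.inl ⟨e.symm, rfl⟩⟩
      · exact ⟨_, h, Or.inr ⟨rfl, e.symm⟩⟩
    · rintro ⟨w, h, e | e⟩
      · exact ⟨h, Or.inl e.1.symm⟩
      · exact ⟨h, Or.inr e.2.symm⟩
  refine ⟨?_, ?_⟩
  · rw [hE, ← Nat.card_coe_set_eq]
    omega
  · rw [hV, hq]
end

section
/- Let p < q be prime numbers, let ℓ ≥ 2 be a natural number, let k₁, …, k_ℓ ∈ {0, 1, …, p−1} be pairwise distinct natural numbers, and let σ₁, …, σ_ℓ ∈ {1, −1}. Let s = Σ_{i=1}^{ℓ} σᵢ·kᵢ ∈ ℤ. Then the number of units a ∈ (ZMod q)ˣ satisfying a^s = Σ_{i=1}^{ℓ} σᵢ·a^{kᵢ} in ZMod q (where a^s denotes the integer power of the unit a, and each a^{kᵢ} is a natural power) is at most 2ℓp + 1. -/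
open Finset

theorem stmt12 (p q : ℕ) (hp : p.Prime) (hq : q.Prime) (hpq : p < q)
    (ℓ : ℕ) (hℓ : 2 ≤ ℓ) (k : Fin ℓ → ℕ) (hk : ∀ i, k i < p)
    (hkinj : Function.Injective k)
    (σ : Fin ℓ → ℤ) (hσ : ∀ i, σ i = 1 ∨ σ i = -1) :
    Set.ncard {a : (ZMod q)ˣ |
        ((a ^ (∑ i, σ i * (k i : ℤ)) : (ZMod q)ˣ) : ZMod q) =
          ∑ i, (σ i : ZMod q) * ((a : ZMod q)) ^ (k i)} ≤ 2 * ℓ * p + 1 := by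
  classical
  haveI : Fact q.Prime := ⟨hq⟩
  set s : ℤ := ∑ i, σ i * (k i : ℤ) with hs
  have habs : |s| ≤ (ℓ : ℤ) * p := by
    calc |s| ≤ ∑ i, |σ i * (k i : ℤ)| := Finset.abs_sum_le_sum_abs _ _
      _ ≤ ∑ _i : Fin ℓ, (p : ℤ) := by
        apply Finset.sum_le_sum
        intro i _
        have h1 := hk i
        rcases hσ i with h | h <;> rw [h] <;> simp <;> omega
      _ = (ℓ : ℤ) * p := by simp
  obtain ⟨h1, h2⟩ := abs_le.mp habs
  obtain ⟨m, hm⟩ : ∃ m : ℕ, (m : ℤ) = (ℓ : ℤ) * p + s :=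
    ⟨((ℓ : ℤ) * p + s).toNat, Int.toNat_of_nonneg (by linarith)⟩
  have hm2 : m ≤ 2 * ℓ * p := by zify; linarith
  obtain ⟨i, hi⟩ : ∃ i, (k i : ℤ) ≠ s := by
    by_contra! h
    have h0 := h ⟨0, by omega⟩
    rw [← h ⟨1, by omega⟩] at h0
    have := hkinj (Int.ofNat_inj.mp h0)
    simp at this
  let P : Polynomial (ZMod q) := Polynomial.X ^ m -
    ∑ j, Polynomial.C (σ j : ZMod q) * Polynomial.X ^ (ℓ * p + k j)
  have hP : P ≠ 0 := by
    intro h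
    have hc : P.coeff (ℓ * p + k i) = 0 := by rw [h]; simp
    have hne : ℓ * p + k i ≠ m := by
      intro h
      apply hi
      have : ((ℓ * p + k i : ℕ) : ℤ) = m := by rw [h]
      push_cast at this
      linarith
    simp only [P, Polynomial.coeff_sub, Polynomial.finset_sum_coeff, Polynomial.coeff_C_mul,
      Polynomial.coeff_X_pow, if_neg hne, add_right_inj, hkinj.eq_iff] at hc
    rcases hσ i with h | h <;> simp [h] at hc
  have hdeg : P.natDegree ≤ 2 * ℓ * p := by
    refine (Polynomial.natDegree_sub_le _ _).trans (max_le ?_ ?_)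
    · simpa using hm2
    · apply Polynomial.natDegree_sum_le_of_forall_le
      intro j _
      refine (Polynomial.natDegree_C_mul_X_pow_le _ _).trans ?_
      have := hk j
      nlinarith
  have hsub : ((fun a : (ZMod q)ˣ => (a : ZMod q)) '' {a : (ZMod q)ˣ |
        ((a ^ s : (ZMod q)ˣ) : ZMod q) =
          ∑ i, (σ i : ZMod q) * ((a : ZMod q)) ^ (k i)}) ⊆ (P.roots.toFinset : Set (ZMod q)) := by
    rintro _ ⟨a, ha, rfl⟩
    simp only [Set.mem_setOf_eq] at ha
    simp only [Finset.mem_coe, Multiset.mem_toFinset, Polynomial.mem_roots hP, Polynomial.IsRoot.def]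
    have e : (a : ZMod q) ^ m = (a : ZMod q) ^ (ℓ * p) * ((a ^ s : (ZMod q)ˣ) : ZMod q) := by
      have : a ^ m = a ^ (ℓ * p) * a ^ s := by
        rw [← zpow_natCast a m, hm, zpow_add, ← zpow_natCast a (ℓ * p)]
        push_cast
        rfl
      rw [← Units.val_pow_eq_pow_val, this]
      simp
    simp only [P, Polynomial.eval_sub, Polynomial.eval_finset_sum, Polynomial.eval_mul,
      Polynomial.eval_C, Polynomial.eval_pow, Polynomial.eval_X]
    rw [e, ha, Finset.mul_sum, sub_eq_zero]
    apply Finset.sum_congr rfl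
    intro j _
    ring
  rw [← Set.ncard_image_of_injective _ (Units.val_injective (α := ZMod q))]
  refine (Set.ncard_le_ncard hsub (Finset.finite_toSet _)).trans ?_
  rw [Set.ncard_coe_finset]
  have := (Multiset.toFinset_card_le P.roots).trans (Polynomial.card_roots' P)
  omega
end
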